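/- Let (X,d,φ) be an irreducible Smale space, P a finite φ-invariant set of periodic points, 0 < γ' ≤ γ < ε_X/2, and K ⊆ G_S(P) an open relatively compact subset. For any finite cover of K by basic sets {V(v_i,w_i,h_i,δ_i,N_i)}_{i=0}^m with δ_i < ε_X/4 for each i, there exist N ∈ ℕ, n ≥ m, and a finite cover of K by basic sets {V(v_i',w_i',h_i',δ_i',N)}_{i=0}^n such that φ^N(X^u(v_i',δ_i')) ⊆ X^u(φ^N(v_i'),γ) and φ^N(X^u(w_i',δ_i')) ⊆ X^u(φ^N(w_i'),γ) for each 0 ≤ i ≤ n, and such that d(x,y) < γ' for all (x,y) ∈ (φ^N×φ^N)(K). -/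

import Mathlib

/-!
The proof rests on three local facts.  Near the diagonal the bracket `[a, b]` is close to `a`
(`exists_br_close`).  If two forward orbits stay close for all time, then `[a, b] = b`
(`exists_br_eq_of_orbits_close`): the orbit of `[a, b]` stays close to that of `b`, and since
`[a, b]` lies on the unstable set of `b`, backward contraction forces equality.  Finally, if
`[a, b]` is close to `a`, the forward orbits of the two contract (`dist_iterate_br_le`).

Hence a pair `(x, y)` in the groupoid whose orbits are close from time `N` on lies in a basic set
centred at itself, with exponent `N` and arbitrarily small radius (`exists_centered`), and such a
set is open by definition of the topology.  When it is small, all of its pairs are uniformly close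
from time `N` on, so on the compact closure of `K` there is a single time `N` after which all
orbit pairs are close (`exists_local_uniform` gives the local version).  For this `N`, the closure
of `K` is covered by basic sets centred at its own points with the common exponent `N`, and a
finite subcover, padded by repetition, is the required one.  Adjoining the centre of one of the
given basic sets to the closure ensures that there is something to pad with when `K` is empty.
-/


open Filter Topology Set

/-- A Smale space: a compact metric space `X` with a homeomorphism `phi`, constants
`eps > 0`, `0 < lam < 1`, and a (globally defined) bracket map `br`, whose axioms
B1--B4, C1, C2 are only required when all brackets occurring are defined, i.e. when the
relevant pairs of points are at distance `< eps`. -/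
structure SmaleSpace (X : Type*) [MetricSpace X] [CompactSpace X] where
  phi : X ≃ₜ X
  eps : ℝ
  lam : ℝ
  eps_pos : 0 < eps
  lam_pos : 0 < lam
  lam_lt_one : lam < 1
  br : X → X → X
  br_continuousOn : ContinuousOn (fun p : X × X => br p.1 p.2) {p : X × X | dist p.1 p.2 < eps}
  br_self : ∀ x : X, br x x = x
  br_b2 : ∀ x y z : X, dist y z < eps → dist x (br y z) < eps → dist x z < eps →
    br x (br y z) = br x z
  br_b3 : ∀ x y z : X, dist x y < eps → dist (br x y) z < eps → dist x z < eps →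
    br (br x y) z = br x z
  br_b4 : ∀ x y : X, dist x y < eps → dist (phi x) (phi y) < eps →
    phi (br x y) = br (phi x) (phi y)
  c1 : ∀ x y : X, dist x y < eps → br x y = y → dist (phi x) (phi y) ≤ lam * dist x y
  c2 : ∀ x y : X, dist x y < eps → br x y = x →
    dist (phi.symm x) (phi.symm y) ≤ lam * dist x y

namespace SmaleSpace

variable {X : Type*} [MetricSpace X] [CompactSpace X] (S : SmaleSpace X)

/-- The local stable set `X^s(x, ε)`. -/
def Xs (x : X) (ε : ℝ) : Set X := {y | dist x y < ε ∧ S.br y x = x}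

/-- The local unstable set `X^u(x, ε)`. -/
def Xu (x : X) (ε : ℝ) : Set X := {y | dist x y < ε ∧ S.br x y = x}

/-- Stable equivalence: `d(φⁿ x, φⁿ y) → 0` as `n → +∞`. -/
def StablyEquiv (x y : X) : Prop :=
  Tendsto (fun n : ℕ => dist ((⇑S.phi)^[n] x) ((⇑S.phi)^[n] y)) atTop (𝓝 0)

/-- Unstable equivalence: `d(φⁿ x, φⁿ y) → 0` as `n → -∞`. -/
def UnstablyEquiv (x y : X) : Prop :=
  Tendsto (fun n : ℕ => dist ((⇑S.phi.symm)^[n] x) ((⇑S.phi.symm)^[n] y)) atTop (𝓝 0)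

/-- A periodic point. -/
def IsPeriodicPt (x : X) : Prop := ∃ n : ℕ, 0 < n ∧ (⇑S.phi)^[n] x = x

/-- Irreducibility of the dynamical system `(X, φ)`. -/
def Irreducible : Prop :=
  ∀ U V : Set X, IsOpen U → IsOpen V → U.Nonempty → V.Nonempty →
    ∃ n : ℕ, 0 < n ∧ ((⇑S.phi)^[n] '' U ∩ V).Nonempty

/-- `X^u(P)`: points unstably equivalent to some point of `P`. -/
def XuP (P : Set X) : Set X := {y | ∃ p ∈ P, S.UnstablyEquiv y p}

/-- The stable groupoid `G_S(P)` as a set of pairs. -/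
def GS (P : Set X) : Set (X × X) :=
  {q | S.StablyEquiv q.1 q.2 ∧ q.1 ∈ S.XuP P ∧ q.2 ∈ S.XuP P}

/-- The map `h(z) = φ^{-N}([φ^N z, φ^N v])`. -/
def hMap (v : X) (N : ℕ) (z : X) : X :=
  (⇑S.phi.symm)^[N] (S.br ((⇑S.phi)^[N] z) ((⇑S.phi)^[N] v))

/-- The basic set `V(v, w, h, δ, N) = {(h z, z) : z ∈ X^u(w, δ)}`. -/
def basicSet (v w : X) (δ : ℝ) (N : ℕ) : Set (X × X) :=
  {q | ∃ z ∈ S.Xu w δ, q = (S.hMap v N z, z)}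

/-- The conditions on the data `(v, w, δ, N)` of a basic set for `G_S(P)`. -/
def IsBasicData (P : Set X) (v w : X) (δ : ℝ) (N : ℕ) : Prop :=
  (v, w) ∈ S.GS P ∧ dist ((⇑S.phi)^[N] v) ((⇑S.phi)^[N] w) < S.eps / 2 ∧
  0 < δ ∧ δ < S.eps / 2 ∧
  (∀ n ≤ N, (⇑S.phi)^[n] '' S.Xu w δ ⊆ S.Xu ((⇑S.phi)^[n] w) (S.eps / 2)) ∧
  (∀ n ≤ N, (⇑S.phi)^[n] '' S.Xu v δ ⊆ S.Xu ((⇑S.phi)^[n] v) (S.eps / 2))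

/-- The stable groupoid `G_S(P)` as a type. -/
abbrev GSPt (P : Set X) : Type _ := {q : X × X // q ∈ S.GS P}

/-- The topology on `G_S(P)` generated by the basic sets. -/
def gsTop (P : Set X) : TopologicalSpace (S.GSPt P) :=
  TopologicalSpace.generateFrom
    {U : Set (S.GSPt P) | ∃ v w δ N, S.IsBasicData P v w δ N ∧
      U = {q : S.GSPt P | q.val ∈ S.basicSet v w δ N}}

/-- A subset `A` of `G_S(P)` is open for the topology generated by the basic sets. -/
def gsOpen (P : Set X) (A : Set (X × X)) : Prop :=
  @IsOpen _ (S.gsTop P) {q : S.GSPt P | q.val ∈ A}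

/-- A subset `A` of `G_S(P)` is relatively compact: its closure in `G_S(P)` is compact. -/
def gsRelCompact (P : Set X) (A : Set (X × X)) : Prop :=
  @IsCompact _ (S.gsTop P) (@closure _ (S.gsTop P) {q : S.GSPt P | q.val ∈ A})

/-- A subset `U` of the unit space `X^u(P)` is open, for the subspace topology induced
via the unit embedding `x ↦ (x, x)`. -/
def gsUnitOpen (P : Set X) (U : Set X) : Prop :=
  U ⊆ S.XuP P ∧ ∃ W : Set (X × X), S.gsOpen P W ∧ ∀ x ∈ S.XuP P, (x ∈ U ↔ (x, x) ∈ W)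

/-- Image of a set of pairs under `φ^N × φ^N`. -/
def phiSq (N : ℕ) (A : Set (X × X)) : Set (X × X) :=
  (fun q : X × X => ((⇑S.phi)^[N] q.1, (⇑S.phi)^[N] q.2)) '' A

/-- `{(x, y) ∈ A : x, y ∈ U}`. -/
def restrictTo (A : Set (X × X)) (U : Set X) : Set (X × X) :=
  {q ∈ A | q.1 ∈ U ∧ q.2 ∈ U}

/-- `U(w, γ)`: the image of `X^u(w, γ) × X^s(w, γ)` under the bracket map. -/
def Uset (w : X) (γ : ℝ) : Set X :=
  {u | ∃ z ∈ S.Xu w γ, ∃ z' ∈ S.Xs w γ, u = S.br z z'}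

end SmaleSpace

/-- The subgroupoid of a pair groupoid generated by a set `A` of pairs: the smallest
collection of pairs containing `A` and closed under inverses and composition. -/
inductive GenGroupoid {X : Type*} (A : Set (X × X)) : X × X → Prop
  | base (q : X × X) (hq : q ∈ A) : GenGroupoid A q
  | inv (x y : X) (h : GenGroupoid A (x, y)) : GenGroupoid A (y, x)
  | comp (x y z : X) (h1 : GenGroupoid A (x, y)) (h2 : GenGroupoid A (y, z)) :
      GenGroupoid A (x, z)

/-- The subgroupoid generated by `A`, as a set of pairs. -/
def genSet {X : Type*} (A : Set (X × X)) : Set (X × X) := {q | GenGroupoid A q}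

/-- `Y` has covering dimension at most `d`: every finite open cover admits a finite
open refinement in which every point belongs to at most `d + 1` members. -/
def CovDimLE (Y : Type*) [TopologicalSpace Y] (d : ℕ) : Prop :=
  ∀ (n : ℕ) (U : Fin n → Set Y), (∀ i, IsOpen (U i)) → (⋃ i, U i) = Set.univ →
    ∃ (m : ℕ) (V : Fin m → Set Y), (∀ k, IsOpen (V k)) ∧ (⋃ k, V k) = Set.univ ∧
      (∀ k, ∃ i, V k ⊆ U i) ∧ ∀ y : Y, Set.ncard {k | y ∈ V k} ≤ d + 1

namespace SmaleSpace

variable {X : Type*} [MetricSpace X] [CompactSpace X] (S : SmaleSpace X)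

/-! ### The bracket near the diagonal and local expansiveness -/

/-- Uniform continuity of the bracket near the diagonal, where `[a, a] = a`. -/
theorem exists_br_close {ε : ℝ} (hε : 0 < ε) :
    ∃ δ > 0, δ ≤ S.eps ∧ ∀ a b, dist a b < δ → dist (S.br a b) a < ε := by
  have hmem : {p : X × X | dist (S.br p.1 p.2) p.1 < ε} ∈ uniformity X := by
    rw [compactSpace_uniformity, Filter.mem_iSup]
    intro x
    have hopen : IsOpen {p : X × X | dist p.1 p.2 < S.eps} :=
      isOpen_lt continuous_dist continuous_const
    have hc : ContinuousAt (fun p : X × X => S.br p.1 p.2) (x, x) :=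
      S.br_continuousOn.continuousAt (hopen.mem_nhds (by simpa using S.eps_pos))
    have hd : ContinuousAt (fun p : X × X => dist (S.br p.1 p.2) p.1) (x, x) :=
      hc.dist continuousAt_fst
    exact hd.eventually_lt continuousAt_const (by simpa [S.br_self] using hε)
  obtain ⟨δ, hδ, h⟩ := Metric.mem_uniformity_dist.1 hmem
  exact ⟨min δ S.eps, lt_min hδ S.eps_pos, min_le_right _ _,
    fun a b hab => h (lt_of_lt_of_le hab (min_le_left _ _))⟩

/-- Iterated form of axiom (B4). -/
theorem iterate_br (a b : X) (n : ℕ)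
    (h : ∀ k ≤ n, dist ((⇑S.phi)^[k] a) ((⇑S.phi)^[k] b) < S.eps) :
    (⇑S.phi)^[n] (S.br a b) = S.br ((⇑S.phi)^[n] a) ((⇑S.phi)^[n] b) := by
  induction n with
  | zero => rfl
  | succ n ih =>
    have h1 := h (n + 1) le_rfl
    have h2 := h n n.le_succ
    rw [Function.iterate_succ_apply', Function.iterate_succ_apply'] at h1
    rw [Function.iterate_succ_apply', Function.iterate_succ_apply', Function.iterate_succ_apply',
      ih fun k hk => h k (hk.trans n.le_succ), S.br_b4 _ _ h2 h1]

/-- Local expansiveness: points whose forward orbits stay close lie on a common local stable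
set. -/
theorem exists_br_eq_of_orbits_close :
    ∃ δ > 0, δ ≤ S.eps / 2 ∧ ∀ a b,
      (∀ n, dist ((⇑S.phi)^[n] a) ((⇑S.phi)^[n] b) < δ) → S.br a b = b := by
  have he := S.eps_pos
  obtain ⟨δ, hδ, -, hclose⟩ := S.exists_br_close (half_pos he)
  refine ⟨min δ (S.eps / 2), lt_min hδ (half_pos he), min_le_right _ _, fun a b h => ?_⟩
  have hlt : ∀ n, dist ((⇑S.phi)^[n] a) ((⇑S.phi)^[n] b) < S.eps / 2 :=
    fun n => (h n).trans_le (min_le_right _ _)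
  have hlt' : ∀ n, dist ((⇑S.phi)^[n] a) ((⇑S.phi)^[n] b) < S.eps :=
    fun n => (hlt n).trans (half_lt_self he)
  have hbr : ∀ n, (⇑S.phi)^[n] (S.br a b) = S.br ((⇑S.phi)^[n] a) ((⇑S.phi)^[n] b) :=
    fun n => S.iterate_br a b n fun k _ => hlt' k
  have hnear : ∀ n, dist ((⇑S.phi)^[n] b) ((⇑S.phi)^[n] (S.br a b)) < S.eps := by
    intro n
    have h1 := hclose _ _ ((h n).trans_le (min_le_left _ _))
    have h2 := hlt n
    rw [hbr n]
    have := dist_triangle ((⇑S.phi)^[n] b) ((⇑S.phi)^[n] a)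
      (S.br ((⇑S.phi)^[n] a) ((⇑S.phi)^[n] b))
    rw [dist_comm ((⇑S.phi)^[n] b) ((⇑S.phi)^[n] a),
      dist_comm ((⇑S.phi)^[n] a) (S.br _ _)] at this
    linarith
  -- `[a, b]` lies on the unstable set of `b`, at every time.
  have hun : ∀ n, S.br ((⇑S.phi)^[n] b) ((⇑S.phi)^[n] (S.br a b)) = (⇑S.phi)^[n] b := by
    intro n
    have h1 := hnear n
    rw [hbr n] at h1 ⊢
    rw [S.br_b2 _ _ _ (hlt' n) h1 (by simpa using he), S.br_self]
  have hpow : ∀ n, dist b (S.br a b) ≤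
      S.lam ^ n * dist ((⇑S.phi)^[n] b) ((⇑S.phi)^[n] (S.br a b)) := by
    intro n
    induction n with
    | zero => simp
    | succ n ih =>
      have h2 := S.c2 _ _ (hnear (n + 1)) (hun (n + 1))
      rw [Function.iterate_succ_apply', Function.iterate_succ_apply', S.phi.symm_apply_apply,
        S.phi.symm_apply_apply] at h2
      rw [Function.iterate_succ_apply', Function.iterate_succ_apply', pow_succ, mul_assoc]
      exact ih.trans (mul_le_mul_of_nonneg_left h2 (pow_nonneg S.lam_pos.le n))
  have hlim : Tendsto (fun n : ℕ => S.lam ^ n * S.eps) atTop (𝓝 0) := by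
    simpa using (tendsto_pow_atTop_nhds_zero_of_lt_one S.lam_pos.le S.lam_lt_one).mul_const S.eps
  have h0 : dist b (S.br a b) ≤ 0 := ge_of_tendsto' hlim fun n =>
    (hpow n).trans (mul_le_mul_of_nonneg_left (hnear n).le (pow_nonneg S.lam_pos.le n))
  exact (dist_le_zero.1 h0).symm

/-- The point `[a, b]` lies on the local stable set of `a`, so its orbit does not move away from
that of `a`. -/
theorem dist_iterate_br_le (a b : X) (hab : dist a b < S.eps)
    (hc : dist (S.br a b) a < S.eps) (n : ℕ) :
    dist ((⇑S.phi)^[n] (S.br a b)) ((⇑S.phi)^[n] a) ≤ dist (S.br a b) a := by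
  have hst : S.br (S.br a b) a = a := by
    rw [S.br_b3 _ _ _ hab hc (by simpa using S.eps_pos), S.br_self]
  suffices h : dist ((⇑S.phi)^[n] (S.br a b)) ((⇑S.phi)^[n] a) ≤ dist (S.br a b) a ∧
      S.br ((⇑S.phi)^[n] (S.br a b)) ((⇑S.phi)^[n] a) = (⇑S.phi)^[n] a from h.1
  induction n with
  | zero => exact ⟨le_rfl, hst⟩
  | succ n ih =>
    obtain ⟨h1, h2⟩ := ih
    have h3 := S.c1 _ _ (h1.trans_lt hc) h2
    have h4 := mul_le_of_le_one_left
      (dist_nonneg (x := (⇑S.phi)^[n] (S.br a b)) (y := (⇑S.phi)^[n] a)) S.lam_lt_one.le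
    have h5 := h3.trans (h4.trans h1)
    rw [Function.iterate_succ_apply', Function.iterate_succ_apply']
    refine ⟨h5, ?_⟩
    rw [← S.br_b4 _ _ (h1.trans_lt hc) (h5.trans_lt hc), h2]

/-! ### Basic sets centred at a given pair -/

/-- Finitely many forward iterates map a small local unstable set into local unstable sets of
prescribed size. -/
theorem exists_radius (x : X) (N : ℕ) {r : ℝ} (hr : 0 < r) (hre : r ≤ S.eps) :
    ∃ δ₀ > 0, ∀ δ ≤ δ₀, ∀ n ≤ N, (⇑S.phi)^[n] '' S.Xu x δ ⊆ S.Xu ((⇑S.phi)^[n] x) r := by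
  have hev : ∀ᶠ z in 𝓝 x, ∀ n ∈ Finset.range (N + 1),
      dist ((⇑S.phi)^[n] x) ((⇑S.phi)^[n] z) < r := by
    rw [Filter.eventually_all_finset]
    intro n _
    have hc : Continuous fun z => dist ((⇑S.phi)^[n] x) ((⇑S.phi)^[n] z) :=
      continuous_const.dist (S.phi.continuous.iterate n)
    exact hc.continuousAt.eventually_lt continuousAt_const (by simpa using hr)
  obtain ⟨δ₀, hδ₀, hball⟩ := Metric.eventually_nhds_iff.1 hev
  refine ⟨δ₀, hδ₀, fun δ hδ n hn => ?_⟩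
  rintro _ ⟨z, ⟨hz, hbr⟩, rfl⟩
  have hz' := hball ((dist_comm z x).trans_lt (hz.trans_le hδ))
  have hd : ∀ k ≤ n, dist ((⇑S.phi)^[k] x) ((⇑S.phi)^[k] z) < r := fun k hk =>
    hz' k (Finset.mem_range.2 (by lia))
  exact ⟨hd n le_rfl,
    by rw [← S.iterate_br x z n fun k hk => (hd k hk).trans_le hre, hbr]⟩

/-- A pair on a common local stable set at time `N` lies in basic sets centred at itself with
exponent `N` and arbitrarily small `φ^N`-image. -/
theorem exists_centered (P : Set X) {x y : X} (hq : (x, y) ∈ S.GS P) (N : ℕ)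
    (hN : dist ((⇑S.phi)^[N] x) ((⇑S.phi)^[N] y) < S.eps / 2)
    (hbr : S.br ((⇑S.phi)^[N] y) ((⇑S.phi)^[N] x) = (⇑S.phi)^[N] x)
    {r : ℝ} (hr : 0 < r) (hre : r < S.eps / 2) :
    ∃ δ, S.IsBasicData P x y δ N ∧ (x, y) ∈ S.basicSet x y δ N ∧
      (⇑S.phi)^[N] '' S.Xu x δ ⊆ S.Xu ((⇑S.phi)^[N] x) r ∧
      (⇑S.phi)^[N] '' S.Xu y δ ⊆ S.Xu ((⇑S.phi)^[N] y) r := by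
  have he := S.eps_pos
  obtain ⟨δx, hδx, hx⟩ := S.exists_radius x N hr (by linarith)
  obtain ⟨δy, hδy, hy⟩ := S.exists_radius y N hr (by linarith)
  have hmono : ∀ u : X, S.Xu u r ⊆ S.Xu u (S.eps / 2) := fun u z hz => ⟨hz.1.trans hre, hz.2⟩
  have hδpos : 0 < min (min δx δy) (S.eps / 4) := lt_min (lt_min hδx hδy) (by linarith)
  have hle := min_le_left (min δx δy) (S.eps / 4)
  have hx' := hx _ (hle.trans (min_le_left _ _))
  have hy' := hy _ (hle.trans (min_le_right _ _))
  refine ⟨min (min δx δy) (S.eps / 4), ⟨hq, hN, hδpos,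
    (min_le_right _ _).trans_lt (by linarith), fun n hn => (hy' n hn).trans (hmono _),
    fun n hn => (hx' n hn).trans (hmono _)⟩, ?_, hx' N le_rfl, hy' N le_rfl⟩
  refine ⟨y, ⟨by simpa using hδpos, S.br_self y⟩, ?_⟩
  have hinv : (⇑S.phi.symm)^[N] ((⇑S.phi)^[N] x) = x :=
    (S.phi.left_inv.iterate N : Function.LeftInverse _ _) x
  rw [hMap, hbr, hinv]

/-- Each pair of the groupoid has an open neighbourhood on which orbit pairs are uniformly close
from some time on. -/
theorem exists_local_uniform (P : Set X) {ε : ℝ} (hε : 0 < ε) (q : S.GSPt P) :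
    ∃ U : Set (S.GSPt P), IsOpen[S.gsTop P] U ∧ q ∈ U ∧ ∃ N₀, ∀ p ∈ U, ∀ n ≥ N₀,
      dist ((⇑S.phi)^[n] p.val.1) ((⇑S.phi)^[n] p.val.2) < ε := by
  obtain ⟨⟨x, y⟩, hq⟩ := q
  have he := S.eps_pos
  obtain ⟨δ₁, hδ₁, hδ₁e, hclose⟩ := S.exists_br_close (lt_min hε he)
  obtain ⟨δ₂, hδ₂, hδ₂e, hexp⟩ := S.exists_br_eq_of_orbits_close
  obtain ⟨M, hM⟩ := eventually_atTop.1
    (hq.1.eventually_lt_const (lt_min (half_pos hδ₁) hδ₂))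
  have hMM := hM M le_rfl
  obtain ⟨δ, hb, hmem, -, himg⟩ := S.exists_centered P hq M
    (hMM.trans_le ((min_le_right _ _).trans hδ₂e))
    (hexp _ _ fun n => by
      rw [← Function.iterate_add_apply, ← Function.iterate_add_apply, dist_comm]
      exact (hM _ (Nat.le_add_left M n)).trans_le (min_le_right _ _))
    (r := min (δ₁ / 2) (S.eps / 4)) (lt_min (half_pos hδ₁) (by linarith))
    ((min_le_right _ _).trans_lt (by linarith))
  refine ⟨{p | p.val ∈ S.basicSet x y δ M},
    TopologicalSpace.isOpen_generateFrom_of_mem ⟨x, y, δ, M, hb, rfl⟩, hmem, M, ?_⟩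
  rintro ⟨p, hp⟩ ⟨z, hz, rfl : p = _⟩ n hn
  obtain ⟨k, rfl⟩ := Nat.exists_eq_add_of_le' hn
  have h1 : dist ((⇑S.phi)^[M] z) ((⇑S.phi)^[M] x) < δ₁ := by
    have h2 := (himg ⟨z, hz, rfl⟩).1.trans_le (min_le_left _ _)
    have h3 := hMM.trans_le (min_le_left _ _)
    rw [dist_comm] at h2 h3
    have := dist_triangle ((⇑S.phi)^[M] z) ((⇑S.phi)^[M] y) ((⇑S.phi)^[M] x)
    linarith
  have h4 := hclose _ _ h1
  have h5 := S.dist_iterate_br_le _ _ (h1.trans_le hδ₁e) (h4.trans_le (min_le_right _ _)) k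
  have h6 : (⇑S.phi)^[M] (S.hMap x M z) = S.br ((⇑S.phi)^[M] z) ((⇑S.phi)^[M] x) :=
    (S.phi.right_inv.iterate M : Function.LeftInverse _ _) _
  rw [Function.iterate_add_apply, Function.iterate_add_apply, h6]
  exact h5.trans_lt (h4.trans_le (min_le_left _ _))

end SmaleSpace

/-! ### Covers by basic sets with a common exponent -/

/-- Lemma `NewCover`: any finite cover of `K` by basic sets with
`δᵢ < ε_X/4` may be replaced by a finite cover by basic sets with a common `N`,
controlled images under `φ^N`, and with `d(x,y) < γ'` on `(φ^N × φ^N)(K)`. -/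
theorem smale_new_cover {X : Type*} [MetricSpace X] [CompactSpace X]
    (S : SmaleSpace X) (hIrr : S.Irreducible) (P : Set X) (hPfin : P.Finite)
    (hPinv : ∀ p ∈ P, S.phi p ∈ P) (hPper : ∀ p ∈ P, S.IsPeriodicPt p)
    (γ γ' : ℝ) (hγ'0 : 0 < γ') (hγ'γ : γ' ≤ γ) (hγ : γ < S.eps / 2)
    (K : Set (X × X)) (hKsub : K ⊆ S.GS P) (hKopen : S.gsOpen P K)
    (hKrc : S.gsRelCompact P K)
    (m : ℕ) (v w : Fin (m + 1) → X) (δ : Fin (m + 1) → ℝ) (Nf : Fin (m + 1) → ℕ)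
    (hbasic : ∀ i, S.IsBasicData P (v i) (w i) (δ i) (Nf i))
    (hδ : ∀ i, δ i < S.eps / 4)
    (hcover : K ⊆ ⋃ i, S.basicSet (v i) (w i) (δ i) (Nf i)) :
    ∃ (N n : ℕ), m ≤ n ∧ ∃ (v' w' : Fin (n + 1) → X) (δ' : Fin (n + 1) → ℝ),
      (∀ i, S.IsBasicData P (v' i) (w' i) (δ' i) N) ∧
      K ⊆ (⋃ i, S.basicSet (v' i) (w' i) (δ' i) N) ∧
      (∀ i, (⇑S.phi)^[N] '' S.Xu (v' i) (δ' i) ⊆ S.Xu ((⇑S.phi)^[N] (v' i)) γ) ∧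
      (∀ i, (⇑S.phi)^[N] '' S.Xu (w' i) (δ' i) ⊆ S.Xu ((⇑S.phi)^[N] (w' i)) γ) ∧
      ∀ q ∈ S.phiSq N K, dist q.1 q.2 < γ' := by
  let _ := S.gsTop P
  obtain ⟨δ₂, hδ₂, hδ₂e, hexp⟩ := S.exists_br_eq_of_orbits_close
  let q₀ : S.GSPt P := ⟨(v 0, w 0), (hbasic 0).1⟩
  let C : Set (S.GSPt P) := insert q₀ (closure {q : S.GSPt P | q.val ∈ K})
  have hC : IsCompact C := IsCompact.insert hKrc q₀
  have hKC : ∀ q (hq : q ∈ K), (⟨q, hKsub hq⟩ : S.GSPt P) ∈ C := fun q hq =>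
    Or.inr (subset_closure hq)
  obtain ⟨N, hN⟩ : ∃ N, ∀ q ∈ C, ∀ n ≥ N,
      dist ((⇑S.phi)^[n] q.val.1) ((⇑S.phi)^[n] q.val.2) < min γ' δ₂ := by
    refine hC.induction_on (p := fun s => ∃ N, ∀ q ∈ s, ∀ n ≥ N,
      dist ((⇑S.phi)^[n] q.val.1) ((⇑S.phi)^[n] q.val.2) < min γ' δ₂) ⟨0, by simp⟩ ?_ ?_ ?_
    · rintro s t hst ⟨N, hN⟩
      exact ⟨N, fun q hq => hN q (hst hq)⟩
    · rintro s t ⟨N, hN⟩ ⟨N', hN'⟩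
      refine ⟨max N N', fun q hq n hn => ?_⟩
      rcases hq with hq | hq
      · exact hN q hq n ((le_max_left _ _).trans hn)
      · exact hN' q hq n ((le_max_right _ _).trans hn)
    · intro q _
      obtain ⟨U, hU, hqU, hN⟩ := S.exists_local_uniform P (lt_min hγ'0 hδ₂) q
      exact ⟨U, mem_nhdsWithin_of_mem_nhds (hU.mem_nhds hqU), hN⟩
  have hcent : ∀ q : C, ∃ δ, S.IsBasicData P q.1.val.1 q.1.val.2 δ N ∧
      q.1.val ∈ S.basicSet q.1.val.1 q.1.val.2 δ N ∧
      (⇑S.phi)^[N] '' S.Xu q.1.val.1 δ ⊆ S.Xu ((⇑S.phi)^[N] q.1.val.1) γ ∧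
      (⇑S.phi)^[N] '' S.Xu q.1.val.2 δ ⊆ S.Xu ((⇑S.phi)^[N] q.1.val.2) γ := by
    rintro ⟨⟨⟨x, y⟩, hq⟩, hqC⟩
    have h := fun n hn => (hN _ hqC n hn).trans_le (min_le_right _ _)
    exact S.exists_centered P hq N ((h N le_rfl).trans_le hδ₂e)
      (hexp _ _ fun n => by
        rw [← Function.iterate_add_apply, ← Function.iterate_add_apply, dist_comm]
        exact h _ (Nat.le_add_left N n))
      (hγ'0.trans_le hγ'γ) hγ
  choose ρ hρ hmem hx hy using hcent
  obtain ⟨t, ht⟩ := hC.elim_finite_subcover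
    (fun q : C => {p : S.GSPt P | p.val ∈ S.basicSet q.1.val.1 q.1.val.2 (ρ q) N})
    (fun q => TopologicalSpace.isOpen_generateFrom_of_mem ⟨_, _, _, _, hρ q, rfl⟩)
    (fun q hq => mem_iUnion.2 ⟨⟨q, hq⟩, hmem ⟨q, hq⟩⟩)
  have : Nonempty t := by
    obtain ⟨q, hqt, -⟩ := mem_iUnion₂.1 (ht (mem_insert q₀ _))
    exact ⟨⟨q, hqt⟩⟩
  -- Enumerate the subcover by `m + #t + 1` indices, with repetitions.
  obtain ⟨e⟩ : Nonempty (t ↪ Fin (m + t.card + 1)) :=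
    Function.Embedding.nonempty_of_card_le (by simp; lia)
  have hf := Function.invFun_surjective e.injective
  refine ⟨N, m + t.card, Nat.le_add_right _ _, fun i => (Function.invFun e i).1.1.val.1,
    fun i => (Function.invFun e i).1.1.val.2, fun i => ρ (Function.invFun e i).1,
    fun i => hρ _, fun q hq => ?_, fun i => hx _, fun i => hy _, ?_⟩
  · obtain ⟨p, hpt, hp⟩ := mem_iUnion₂.1 (ht (hKC q hq))
    obtain ⟨i, hi⟩ := hf ⟨p, hpt⟩
    refine mem_iUnion.2 ⟨i, ?_⟩
    simp only [hi]
    exact hp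
  · rintro _ ⟨q, hq, rfl⟩
    exact (hN _ (hKC q hq) N le_rfl).trans_le (min_le_left _ _)
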